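/- Fix ℓ, n ∈ ℕ. The restrictions to ℓ-singular conjugacy classes of the irreducible characters χ^λ of S_n indexed by ℓ-singular partitions λ form a ℤ-basis for the ℤ-span of the restrictions of all irreducible characters of S_n to the ℓ-singular classes. -/

import Mathlib

open scoped Classical

namespace SnTable

variable {n : ℕ}

/-- The parts of a partition, listed in weakly decreasing order. -/
def descList (μ : Nat.Partition n) : List ℕ := (μ.parts.sort (· ≤ ·)).reverse

/-- Strict lexicographic order on partitions of `n` (comparing the lists of parts
written in decreasing order). -/
def plex (μ ν : Nat.Partition n) : Prop := List.Lex (· < ·) (descList μ) (descList ν)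

/-- Weak lexicographic order on partitions of `n`. -/
def plexLE (μ ν : Nat.Partition n) : Prop := μ = ν ∨ plex μ ν

/-- `a_μ = ∏ i^{m_i(μ)}`, the product of the parts of `μ`. -/
def aNum (μ : Nat.Partition n) : ℕ := μ.parts.prod

/-- `b_μ = ∏ m_i(μ)!`, the product of the factorials of the multiplicities. -/
def bNum (μ : Nat.Partition n) : ℕ :=
  ∏ i ∈ μ.parts.toFinset, (μ.parts.count i).factorial

/-- `z_μ = a_μ b_μ`, the centralizer order of an element of cycle type `μ` in `S_n`. -/
def zNum (μ : Nat.Partition n) : ℕ := aNum μ * bNum μ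

/-- The cycle type of a permutation of `Fin n`, as a partition of `n`. -/
def cycleTypePartition (g : Equiv.Perm (Fin n)) : Nat.Partition n :=
  (Fintype.card_fin n) ▸ g.partition

/-- The value at `g` of the permutation character `ξ^λ` of `S_n` obtained by inducing the
trivial character from the Young subgroup `S_λ`: it counts the ordered set partitions of
`Fin n` with block sizes `λ₁ ≥ λ₂ ≥ …` that are fixed by `g`. -/
def permChar (lam : Nat.Partition n) (g : Equiv.Perm (Fin n)) : ℕ :=
  Fintype.card {f : Fin n → Fin (descList lam).length //
    (∀ x, f (g x) = f x) ∧
    ∀ j, (Finset.univ.filter fun x => f x = j).card = (descList lam).get j}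

/-- `X` is the character table of the symmetric group `S_n`, with rows and columns indexed
by the partitions of `n`: each row is an irreducible character (as a class function, via
cycle types), distinct rows are distinct characters, and the labelling is the standard one,
pinned down by the fact that the transition matrix expressing the Young permutation
characters `ξ^λ` in terms of the rows of `X` is unitriangular with respect to the
lexicographic order. -/
def IsCharTable (X : Nat.Partition n → Nat.Partition n → ℤ) : Prop :=
  (∀ lam : Nat.Partition n, ∃ V : FDRep ℂ (Equiv.Perm (Fin n)),
      CategoryTheory.Simple V ∧
      ∀ g : Equiv.Perm (Fin n), V.character g = (X lam (cycleTypePartition g) : ℂ)) ∧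
  (∃ d : Nat.Partition n → Nat.Partition n → ℤ,
      (∀ lam, d lam lam = 1) ∧
      (∀ lam mu, d lam mu ≠ 0 → plexLE lam mu) ∧
      (∀ lam (g : Equiv.Perm (Fin n)),
        (permChar lam g : ℤ) = ∑ mu, d lam mu * X mu (cycleTypePartition g))) ∧
  Function.Injective X


/-- A partition is `ℓ`-singular if some part size occurs with multiplicity at least `ℓ`. -/
def IsSingular (ℓ : ℕ) {n : ℕ} (lam : Nat.Partition n) : Prop :=
  ∃ i ∈ lam.parts, ℓ ≤ lam.parts.count i

/-- A partition (cycle type) is `ℓ`-class singular if some part is divisible by `ℓ`. -/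
def IsClassSingular (ℓ : ℕ) {n : ℕ} (μ : Nat.Partition n) : Prop :=
  ∃ i ∈ μ.parts, ℓ ∣ i

/-! Frobenius' formula expands the power sum of the cycle type of `g` in monomial symmetric
functions, `p_{ct(g)} = ∑ ν, ξ^ν(g) m_ν`. Let `λ = (r^ℓ) ∪ M` be `ℓ`-singular and substitute the
`ℓ`-th roots of unity for `ℓ` of the variables. When `ℓ ∤ k` this turns `p_k` into the power sum of
the remaining variables, so if no part of `ct(g)` is divisible by `ℓ`, then `p_{ct(g)}` stays
homogeneous of degree `n` and its coefficient at `y^M`, a monomial of degree `n - ℓr`, vanishes.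
Taking the same coefficient of the `m_ν` yields a relation `∑ ν, a_ν ξ^ν(g) = 0` where `a_λ` is a
unit and `a_ν ≠ 0` only for `ν ≥ λ` lexicographically. In terms of irreducible characters this is a
virtual character `∑ ν, c_{λν} χ^ν`, with `c` unitriangular, vanishing off the `ℓ`-singular classes.

By row orthogonality these virtual characters, restricted to the `ℓ`-singular classes, pair with the
restricted `χ^ν` through `c`, whose square part on `ℓ`-singular labels is invertible over `ℤ`. By
Glaisher's theorem there are as many `ℓ`-singular labels as `ℓ`-singular classes, so the pairing is
perfect over `ℚ` and every restricted `χ^ν` is an integral combination of the chosen ones. -/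

open Matrix MvPolynomial

section LinearAlgebra

variable {R P S T : Type*} [CommRing R] [Fintype S] [Fintype T] [DecidableEq S]

theorem linearIndependent_row_of_det_mul_transpose_ne_zero [NoZeroDivisors R]
    {U Y : Matrix S T R} (h : (U * Yᵀ).det ≠ 0) : LinearIndependent R Y.row := by
  have hinj : Function.Injective (U.mulVec ∘ Yᵀ.mulVec) := by
    simpa only [Function.comp_def, mulVec_mulVec] using mulVec_injective_of_det_ne_zero h
  exact mulVec_injective_iff.1 hinj.of_comp

theorem mulVec_injective_of_det_mul_ne_zero [NoZeroDivisors R]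
    (hcard : Fintype.card S = Fintype.card T) {U : Matrix S T R} {V : Matrix T S R}
    (h : (U * V).det ≠ 0) : Function.Injective U.mulVec := by
  let e : S ≃ T := Fintype.equivOfCardEq hcard
  have hdet : (U.submatrix id e).det * (V.submatrix e id).det ≠ 0 := by
    rwa [← det_mul, submatrix_mul_equiv, submatrix_id_id]
  have hinj := mulVec_injective_of_det_ne_zero (left_ne_zero_of_mul hdet)
  have hU : U.mulVec = (U.submatrix id e).mulVec ∘ (· ∘ e) := by
    ext v
    simp [submatrix_mulVec_equiv, Function.comp_assoc]
  rw [hU]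
  exact hinj.comp e.surjective.injective_comp_right

section SelectedRows

variable [IsDomain R] {U : Matrix S T R} {Y : Matrix P T R} {c : Matrix S P R} {N : R} {ι : S → P}

theorem det_mul_transpose_submatrix_ne_zero (hN : N ≠ 0) (hc : IsUnit (c.submatrix id ι).det)
    (h : U * Yᵀ = N • c) : (U * (Y.submatrix ι id)ᵀ).det ≠ 0 := by
  have hι : U * (Y.submatrix ι id)ᵀ = N • c.submatrix id ι := congrArg (submatrix · id ι) h
  rw [hι, det_smul]
  exact mul_ne_zero (pow_ne_zero _ hN) hc.ne_zero

theorem exists_eq_mul_submatrix (hcard : Fintype.card S = Fintype.card T) (hN : N ≠ 0)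
    (hc : IsUnit (c.submatrix id ι).det) (h : U * Yᵀ = N • c) :
    ∃ B : Matrix P S R, Y = B * Y.submatrix ι id := by
  have hU : Function.Injective U.mulVec :=
    mulVec_injective_of_det_mul_ne_zero hcard (det_mul_transpose_submatrix_ne_zero hN hc h)
  set C := c.submatrix id ι
  have hι : U * (Y.submatrix ι id)ᵀ = N • C := congrArg (submatrix · id ι) h
  have heq : U * Yᵀ = U * ((C⁻¹ * c)ᵀ * Y.submatrix ι id)ᵀ := by
    rw [transpose_mul, transpose_transpose, ← Matrix.mul_assoc, hι, Matrix.smul_mul, h,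
      mul_nonsing_inv_cancel_left _ _ hc]
  exact ⟨(C⁻¹ * c)ᵀ, transpose_injective <| ext_col fun p => hU <|
    funext fun s => congrFun₂ heq s p⟩

-- A pairing of the rows of `Y` with vectors `U` that is, on the selected rows, invertible up to `N`
-- forces the selected rows to span because there are as many of them as there are columns.
theorem linearIndependent_and_span_row_submatrix_eq (hcard : Fintype.card S = Fintype.card T)
    (hN : N ≠ 0) (hc : IsUnit (c.submatrix id ι).det) (h : U * Yᵀ = N • c) :
    LinearIndependent R (Y.submatrix ι id).row ∧
      Submodule.span R (Set.range (Y.submatrix ι id).row) = Submodule.span R (Set.range Y.row) := by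
  refine ⟨linearIndependent_row_of_det_mul_transpose_ne_zero
    (det_mul_transpose_submatrix_ne_zero hN hc h), le_antisymm ?_ ?_⟩
  · exact Submodule.span_mono (Set.range_subset_iff.2 fun s => ⟨ι s, rfl⟩)
  · obtain ⟨B, hB⟩ := exists_eq_mul_submatrix hcard hN hc h
    refine Submodule.span_le.2 (Set.range_subset_iff.2 fun p => ?_)
    have hp : Y.row p = ∑ s, B p s • (Y.submatrix ι id).row s :=
      (congrFun hB p).trans (vecMul_eq_sum _ _)
    rw [hp]
    exact Submodule.sum_mem _ fun s _ => Submodule.smul_mem _ _ (Submodule.subset_span ⟨s, rfl⟩)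

end SelectedRows

theorem submatrix_val_mul_submatrix_val_of_col_eq_zero {Q : Type*} {p : T → Prop}
    [Fintype {t // p t}] {A : Matrix P T R} (B : Matrix T Q R) (hA : ∀ i t, ¬ p t → A i t = 0) :
    (A.submatrix id Subtype.val : Matrix P {t // p t} R) * B.submatrix Subtype.val id = A * B := by
  ext i q
  refine Fintype.sum_of_injective Subtype.val Subtype.val_injective _ _ (fun t ht => ?_)
    fun t => rfl
  simp only [hA i t fun hp => ht ⟨⟨t, hp⟩, rfl⟩, zero_mul]

end LinearAlgebra

section LexicographicOrder

theorem lex_lt_of_count_le {α : Type*} [LinearOrder α] {r : α} : ∀ {l₁ l₂ : List α},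
    l₁.Pairwise (· ≥ ·) → l₂.Pairwise (· ≥ ·) → (∀ i, r < i → l₁.count i ≤ l₂.count i) →
    l₁.count r < l₂.count r → List.Lex (· < ·) l₁ l₂
  | _, [], _, _, _, h => by simp at h
  | [], _ :: _, _, _, _, _ => List.Lex.nil
  | a :: l₁, b :: l₂, h₁, h₂, hle, hlt => by
    rcases lt_trichotomy a b with hab | rfl | hba
    · exact List.Lex.rel hab
    · refine List.Lex.cons (lex_lt_of_count_le (r := r) h₁.tail h₂.tail (fun i hi => ?_) ?_)
      · simpa only [List.count_cons, add_le_add_iff_right] using hle i hi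
      · simpa only [List.count_cons, add_lt_add_iff_right] using hlt
    · have hcount : ∀ i, b < i → (b :: l₂).count i = 0 := fun i hi =>
        List.count_eq_zero.2 fun hmem => (List.mem_cons.1 hmem).elim hi.ne'
          fun h => ((List.pairwise_cons.1 h₂).1 i h).not_gt hi
      rcases lt_or_ge r a with hra | har
      · have := hcount a hba ▸ hle a hra
        simp at this
      · have := hcount r (hba.trans_le har) ▸ hlt
        simp at this

theorem coe_descList (μ : Nat.Partition n) : (descList μ : Multiset ℕ) = μ.parts := by
  rw [descList, ← Multiset.coe_reverse, List.reverse_reverse, Multiset.sort_eq]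

theorem pairwise_descList (μ : Nat.Partition n) : (descList μ).Pairwise (· ≥ ·) :=
  List.pairwise_reverse.2 (Multiset.pairwise_sort _ _)

theorem count_descList (μ : Nat.Partition n) (i : ℕ) :
    (descList μ).count i = μ.parts.count i := by
  rw [← Multiset.coe_count, coe_descList]

theorem descList_injective : Function.Injective (descList (n := n)) := fun μ ν h =>
  Nat.Partition.ext (by rw [← coe_descList, ← coe_descList, h])

theorem plexLE_iff {μ ν : Nat.Partition n} : plexLE μ ν ↔ descList μ ≤ descList ν := by
  rw [le_iff_eq_or_lt, descList_injective.eq_iff]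
  exact or_congr_right (List.lt_iff_lex_lt _ _).symm

theorem plex_of_count_le {μ ν : Nat.Partition n} {r : ℕ}
    (hle : ∀ i, r < i → μ.parts.count i ≤ ν.parts.count i)
    (hlt : μ.parts.count r < ν.parts.count r) : plex μ ν := by
  simp only [← count_descList] at hle hlt
  exact lex_lt_of_count_le (pairwise_descList μ) (pairwise_descList ν) hle hlt

end LexicographicOrder

section CycleType

theorem eq_of_filter_two_le_eq {s t : Multiset ℕ} (hs : ∀ i ∈ s, 0 < i) (ht : ∀ i ∈ t, 0 < i)
    (hsum : s.sum = t.sum) (h : s.filter (2 ≤ ·) = t.filter (2 ≤ ·)) : s = t := by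
  have key : ∀ u : Multiset ℕ, (∀ i ∈ u, 0 < i) → u = u.filter (2 ≤ ·) +
      Multiset.replicate (u.sum - (u.filter (2 ≤ ·)).sum) 1 := fun u hu => by
    have hones : u.filter (¬ 2 ≤ ·) = Multiset.replicate (u.filter (¬ 2 ≤ ·)).card 1 :=
      Multiset.eq_replicate_card.2 fun i hi => by
        have := hu i (Multiset.mem_of_mem_filter hi)
        have := Multiset.of_mem_filter hi
        omega
    have hsplit := Multiset.filter_add_not (2 ≤ ·) u
    conv_rhs => rw [← congrArg Multiset.sum hsplit, Multiset.sum_add, Nat.add_sub_cancel_left,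
      hones, Multiset.sum_replicate, smul_eq_mul, mul_one, ← hones]
    exact hsplit.symm
  rw [key s hs, key t ht, hsum, h]

variable {α : Type*} {g : Equiv.Perm α}

/-- The cycles of a permutation, fixed points included, as the classes of `SameCycle`. -/
abbrev Cycles (g : Equiv.Perm α) : Type _ := Quotient (Equiv.Perm.SameCycle.setoid g)

variable [Fintype α]

/-- The number of elements of a cycle of a permutation; `1` for a fixed point. -/
noncomputable def cycleLength (c : Cycles g) : ℕ := Finset.card {x | (⟦x⟧ : Cycles g) = c}

theorem cycleLength_pos (c : Cycles g) : 0 < cycleLength c :=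
  Finset.card_pos.2 ⟨c.out, by simp⟩

theorem sum_cycleLength : ∑ c : Cycles g, cycleLength c = Fintype.card α :=
  (Finset.card_eq_sum_card_fiberwise fun _ _ => Finset.mem_univ _).symm

theorem cycleLength_mk [DecidableEq α] {x : α} (hx : g x ≠ x) :
    cycleLength (⟦x⟧ : Cycles g) = (g.cycleOf x).support.card := by
  refine congrArg Finset.card (Finset.ext fun y => ?_)
  rw [Equiv.Perm.mem_support_cycleOf_iff' hx, Equiv.Perm.sameCycle_comm, Finset.mem_filter_univ]
  exact Quotient.eq

theorem two_le_cycleLength_mk_iff {x : α} : 2 ≤ cycleLength (⟦x⟧ : Cycles g) ↔ g x ≠ x := by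
  refine ⟨fun h hx => ?_, fun hx => ?_⟩
  · obtain ⟨y, hy, hyx⟩ := Finset.exists_mem_ne h x
    have hsame : g.SameCycle y x := Quotient.exact (Finset.mem_filter_univ y |>.1 hy)
    exact hyx (hsame.eq_of_right hx)
  · rw [cycleLength_mk hx]
    exact Equiv.Perm.two_le_card_support_cycleOf_iff.2 hx

theorem filter_two_le_map_cycleLength [DecidableEq α] :
    (Finset.univ.val.map (cycleLength (g := g))).filter (2 ≤ ·) = g.cycleType := by
  rw [Multiset.filter_map, Equiv.Perm.cycleType_def]
  have two_le_iff : ∀ c : Cycles g, 2 ≤ cycleLength c ↔ g c.out ≠ c.out := fun c => by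
    rw [← two_le_cycleLength_mk_iff, Quotient.out_eq]
  have out_ne : ∀ c ∈ Finset.univ.val.filter ((2 ≤ ·) ∘ cycleLength (g := g)), g c.out ≠ c.out :=
    fun c hc => (two_le_iff c).1 (Multiset.mem_filter.1 hc).2
  refine Multiset.map_eq_map_of_bij_of_nodup _ _ (Finset.univ.nodup.filter _)
    g.cycleFactorsFinset.nodup (fun c _ => g.cycleOf c.out) (fun c hc => ?_)
    (fun c hc c' _ h => ?_) (fun σ hσ => ?_) (fun c hc => ?_)
  · exact Equiv.Perm.cycleOf_mem_cycleFactorsFinset_iff.2 (Equiv.Perm.mem_support.2 (out_ne c hc))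
  · have hmem : c.out ∈ (g.cycleOf c'.out).support := by
      rw [← h, Equiv.Perm.mem_support_cycleOf_iff' (out_ne c hc)]
    have hsame : g.SameCycle c'.out c.out := (Equiv.Perm.mem_support_cycleOf_iff.1 hmem).1
    exact (Quotient.out_equiv_out.1 hsame).symm
  · obtain ⟨x, hx⟩ := (Equiv.Perm.mem_cycleFactorsFinset_iff.1 hσ).1.nonempty_support
    have hσx : σ = g.cycleOf x := Equiv.Perm.cycle_is_cycleOf hx hσ
    have hgx : g x ≠ x :=
      Equiv.Perm.mem_support.1 (Equiv.Perm.mem_cycleFactorsFinset_support_le hσ hx)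
    refine ⟨⟦x⟧, Multiset.mem_filter.2 ⟨Finset.mem_univ _, two_le_cycleLength_mk_iff.2 hgx⟩, ?_⟩
    have hsame : g.SameCycle (⟦x⟧ : Cycles g).out x :=
      Quotient.mk_out (s := Equiv.Perm.SameCycle.setoid g) x
    rw [hsame.cycleOf_eq, hσx]
  · rw [Function.comp_apply, ← cycleLength_mk (out_ne c hc), Quotient.out_eq]

theorem map_cycleLength [DecidableEq α] :
    Finset.univ.val.map (cycleLength (g := g)) = g.partition.parts := by
  refine eq_of_filter_two_le_eq ?_ (fun _ => g.partition.parts_pos) ?_ ?_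
  · simpa using cycleLength_pos
  · exact sum_cycleLength.trans g.partition.parts_sum.symm
  · rw [filter_two_le_map_cycleLength, Equiv.Perm.filter_parts_partition_eq_cycleType]

theorem parts_cycleTypePartition (g : Equiv.Perm (Fin n)) :
    (cycleTypePartition g).parts = g.partition.parts := by
  have key : ∀ (m : ℕ) (h : Fintype.card (Fin n) = m),
      (h ▸ g.partition : Nat.Partition m).parts = g.partition.parts := fun m h => by
    subst h
    rfl
  exact key n _

theorem cycleTypePartition_inv (g : Equiv.Perm (Fin n)) :
    cycleTypePartition g⁻¹ = cycleTypePartition g := by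
  ext1
  rw [parts_cycleTypePartition, parts_cycleTypePartition, Equiv.Perm.parts_partition,
    Equiv.Perm.parts_partition, Equiv.Perm.cycleType_inv, Equiv.Perm.support_inv]

theorem cycleTypePartition_surjective : Function.Surjective (cycleTypePartition (n := n)) := by
  intro μ
  have hle : (μ.parts.filter (2 ≤ ·)).sum ≤ Fintype.card (Fin n) := by
    have h := congrArg Multiset.sum (Multiset.filter_add_not (2 ≤ ·) μ.parts)
    rw [Multiset.sum_add, μ.parts_sum] at h
    exact (Nat.le.intro h).trans_eq (Fintype.card_fin n).symm
  obtain ⟨g, hg⟩ := (Equiv.Perm.exists_with_cycleType_iff (Fin n)).2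
    ⟨hle, fun i hi => Multiset.of_mem_filter hi⟩
  refine ⟨g, Nat.Partition.ext (eq_of_filter_two_le_eq (fun _ => Nat.Partition.parts_pos _)
    (fun _ => μ.parts_pos) ?_ ?_)⟩
  · rw [Nat.Partition.parts_sum, Nat.Partition.parts_sum]
  · rw [parts_cycleTypePartition, Equiv.Perm.filter_parts_partition_eq_cycleType, hg]

end CycleType

section FrobeniusFormula

theorem apply_eq_of_sameCycle {α κ : Type*} [Finite α] {g : Equiv.Perm α} {f : α → κ}
    (hf : ∀ x, f (g x) = f x) {x y : α} (h : g.SameCycle x y) : f x = f y := by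
  obtain ⟨k, -, rfl⟩ := h.exists_pow_eq'
  have hfk := (show Function.Semiconj f g id from hf).iterate_right k x
  rw [Function.iterate_id, Equiv.Perm.iterate_eq_pow] at hfk
  exact hfk.symm

theorem sum_prod_mk_eq_sum_invariant {α κ R : Type*} [Fintype α] [DecidableEq α] [Fintype κ]
    [CommSemiring R] (g : Equiv.Perm α) [DecidablePred fun f : α → κ => ∀ x, f (g x) = f x]
    (w : κ → R) :
    ∑ F : Cycles g → κ, ∏ x, w (F ⟦x⟧) = ∑ f : α → κ with ∀ x, f (g x) = f x, ∏ x, w (f x) := by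
  refine Finset.sum_nbij' (fun F x => F ⟦x⟧) (fun f c => f c.out) (fun F _ => ?_)
    (fun f _ => Finset.mem_univ _) (fun F _ => ?_) (fun f hf => ?_) (fun F _ => rfl)
  · refine (Finset.mem_filter_univ _).2 fun x => congrArg F (Quotient.sound ?_)
    exact Equiv.Perm.sameCycle_apply_left.2 (Equiv.Perm.SameCycle.refl g x)
  · exact funext fun c => congrArg F c.out_eq
  · exact funext fun x => apply_eq_of_sameCycle ((Finset.mem_filter_univ _).1 hf)
      (Quotient.mk_out (s := Equiv.Perm.SameCycle.setoid g) x)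

theorem prod_map_parts_partition {α κ R : Type*} [Fintype α] [DecidableEq α] [Fintype κ]
    [CommSemiring R] (g : Equiv.Perm α) [DecidablePred fun f : α → κ => ∀ x, f (g x) = f x]
    (w : κ → R) :
    (g.partition.parts.map fun k => ∑ i, w i ^ k).prod =
      ∑ f : α → κ with ∀ x, f (g x) = f x, ∏ x, w (f x) := by
  rw [← map_cycleLength, Multiset.map_map, ← sum_prod_mk_eq_sum_invariant]
  change ∏ c : Cycles g, ∑ i, w i ^ cycleLength c = _
  rw [Finset.prod_univ_sum, Fintype.piFinset_univ]
  refine Finset.sum_congr rfl fun F _ => ?_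
  rw [← Finset.prod_fiberwise' Finset.univ (fun x => (⟦x⟧ : Cycles g)) fun c => w (F c)]
  exact Finset.prod_congr rfl fun c _ => by rw [Finset.prod_const, cycleLength]

variable {κ : Type*} [DecidableEq κ]

/-- The multiset of values of a map `f` on `Fin n`, with multiplicities: the exponent of the
monomial `∏ x, X (f x)`, in the form in which `msymm` indexes its terms. -/
def content (f : Fin n → κ) : Sym κ n := ⟨Finset.univ.val.map f, by simp⟩

theorem content_eq_iff {f : Fin n → κ} {s : Sym κ n} :
    content f = s ↔ ∀ k, Finset.card {x | f x = k} = (s : Multiset κ).count k := by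
  rw [← Sym.coe_inj, Multiset.ext]
  simp only [content, Sym.coe_mk, Multiset.count_map, eq_comm (b := f _)]
  rfl

theorem exists_injective_count_eq {s : Multiset κ} {l : List ℕ}
    (h : (l : Multiset ℕ) = s.dedup.map s.count) :
    ∃ j : Fin l.length → κ, Function.Injective j ∧ (∀ i, s.count (j i) = l.get i) ∧
      ∀ k ∈ s, ∃ i, j i = k := by
  have hperm : l.Perm (s.dedup.toList.map s.count) := by
    rw [← Multiset.coe_eq_coe, h, ← Multiset.map_coe, Multiset.coe_toList]
  obtain ⟨m, rfl, hm⟩ : Relation.Comp (· = List.map s.count ·) List.Perm l s.dedup.toList := by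
    rwa [List.eq_map_comp_perm]
  have hnodup : m.Nodup := hm.nodup_iff.2 (by
    rw [← Multiset.coe_nodup, Multiset.coe_toList]
    exact s.nodup_dedup)
  refine ⟨fun i => m.get (i.cast (List.length_map _)), ?_, fun i => by simp, fun k hk => ?_⟩
  · exact hnodup.injective_get.comp (Fin.cast_injective _)
  · obtain ⟨i, hi⟩ := List.get_of_mem (hm.mem_iff.2 (by simpa using hk))
    exact ⟨i.cast (List.length_map _).symm, hi⟩

theorem card_invariant_content_eq [Fintype κ] (s : Sym κ n) (g : Equiv.Perm (Fin n)) :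
    Finset.card {f : Fin n → κ | (∀ x, f (g x) = f x) ∧ content f = s} =
      permChar (Nat.Partition.ofSym s) g := by
  obtain ⟨j, hj, hcount, hmem⟩ :=
    exists_injective_count_eq (s := (s : Multiset κ)) (coe_descList (Nat.Partition.ofSym s))
  have card_fiber : ∀ (f : Fin n → Fin _) i,
      Finset.card {x | j (f x) = j i} = Finset.card {x | f x = i} := fun f i => by
    simp only [hj.eq_iff]
  rw [permChar, Fintype.card_subtype]
  symm
  refine Finset.card_bij (fun f _ => j ∘ f) (fun f hf => ?_) (fun f _ f' _ h => hj.comp_left h)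
    (fun f hf => ?_)
  · obtain ⟨hinv, hf⟩ := (Finset.mem_filter_univ _).1 hf
    refine (Finset.mem_filter_univ _).2 ⟨fun x => congrArg j (hinv x), content_eq_iff.2 fun k => ?_⟩
    by_cases hk : ∃ i, j i = k
    · obtain ⟨i, rfl⟩ := hk
      rw [hcount, ← hf]
      exact card_fiber f i
    · rw [Multiset.count_eq_zero.2 fun h => hk (hmem k h), Finset.card_eq_zero,
        Finset.filter_eq_empty_iff]
      exact fun x _ hx => hk ⟨f x, hx⟩
  · obtain ⟨hinv, rfl⟩ := (Finset.mem_filter_univ _).1 hf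
    choose f' hf' using fun x => hmem (f x) (Multiset.mem_map_of_mem f (Finset.mem_univ_val x))
    refine ⟨f', (Finset.mem_filter_univ _).2 ⟨fun x => hj ?_, fun i => ?_⟩, funext hf'⟩
    · rw [hf', hf', hinv]
    · rw [← hcount, ← content_eq_iff.1 rfl, ← card_fiber]
      simp only [hf']

theorem psumPart_cycleTypePartition (κ R : Type*) [Fintype κ] [DecidableEq κ] [CommSemiring R]
    (g : Equiv.Perm (Fin n)) : psumPart κ R (cycleTypePartition g) =
      ∑ ν, permChar ν g • msymm κ R ν := by
  have hfiber : ∀ s : Sym κ n, ∑ f : Fin n → κ with (∀ x, f (g x) = f x) ∧ content f = s,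
      ∏ x, (X (f x) : MvPolynomial κ R) =
        permChar (Nat.Partition.ofSym s) g • (s.1.map X).prod := fun s => by
    rw [← card_invariant_content_eq, ← Finset.sum_const]
    refine Finset.sum_congr rfl fun f hf => ?_
    obtain ⟨-, rfl⟩ := (Finset.mem_filter_univ _).1 hf
    rw [content, Multiset.map_map]
    rfl
  calc psumPart κ R (cycleTypePartition g)
      = ∑ f : Fin n → κ with ∀ x, f (g x) = f x, ∏ x, (X (f x) : MvPolynomial κ R) := by
        rw [← prod_map_parts_partition g (X (R := R)), ← parts_cycleTypePartition]
        rfl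
    _ = ∑ s : Sym κ n, permChar (Nat.Partition.ofSym s) g • (s.1.map X).prod := by
        rw [← Finset.sum_fiberwise _ content]
        simp only [Finset.filter_filter, hfiber]
    _ = ∑ ν, permChar ν g • msymm κ R ν := by
        rw [← Finset.sum_fiberwise _ fun s => Nat.Partition.ofSym s]
        refine Finset.sum_congr rfl fun ν _ => ?_
        rw [msymm, Finset.smul_sum, ← Finset.sum_subtype_eq_sum_filter, Finset.subtype_univ]
        exact Finset.sum_congr rfl fun s _ => by rw [s.2]

end FrobeniusFormula

section RootsOfUnity

theorem sum_pow_pow_eq_zero {A : Type*} [CommRing A] [IsDomain A] {ℓ : ℕ} {ζ : A}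
    (hζ : IsPrimitiveRoot ζ ℓ) {k : ℕ} (hk : ¬ ℓ ∣ k) : ∑ i : Fin ℓ, (ζ ^ (i : ℕ)) ^ k = 0 := by
  have hne : ζ ^ k - 1 ≠ 0 := sub_ne_zero.2 fun h => hk (hζ.dvd_of_pow_eq_one k h)
  refine (mul_eq_zero_iff_right hne).1 ?_
  simp_rw [pow_right_comm ζ _ k, Fin.sum_univ_eq_sum_range]
  rw [geom_sum_mul, pow_right_comm, hζ.pow_eq_one, one_pow, sub_self]

theorem isHomogeneous_psumPart (σ R : Type*) [Fintype σ] [CommSemiring R] (μ : Nat.Partition n) :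
    (psumPart σ R μ).IsHomogeneous n := by
  have hpsum : ∀ k, (psum σ R k).IsHomogeneous k := fun k =>
    IsHomogeneous.sum _ _ _ fun i _ => isHomogeneous_X_pow i k
  have key : ∀ s : Multiset ℕ, (s.map (psum σ R)).prod.IsHomogeneous s.sum := fun s => by
    induction s using Multiset.induction with
    | empty => simpa using isHomogeneous_one σ R
    | cons k s ih => simpa using (hpsum k).mul ih
  simpa only [psumPart, μ.parts_sum] using key μ.parts

theorem prod_map_X {σ R : Type*} [Fintype σ] [DecidableEq σ] [CommSemiring R] (s : Multiset σ) :
    (s.map X).prod = ∏ k, (X k : MvPolynomial σ R) ^ s.count k :=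
  Finset.prod_multiset_map_count s X |>.trans <| Finset.prod_subset (Finset.subset_univ _)
    fun k _ hk => by rw [Multiset.count_eq_zero.2 (mt Multiset.mem_toFinset.2 hk), pow_zero]

variable {A J : Type*} [CommRing A]

/-- Substitutes the powers `1, ζ, …, ζ ^ (ℓ - 1)` for the first `ℓ` variables. For `ζ` a primitive
`ℓ`-th root of unity this removes the contribution of these variables to the power sums `p_k` with
`ℓ ∤ k`. -/
noncomputable def rootEval (ζ : A) (ℓ : ℕ) (J : Type*) :
    MvPolynomial (Fin ℓ ⊕ J) A →ₐ[A] MvPolynomial J A :=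
  aeval (Sum.elim (fun i => C (ζ ^ (i : ℕ))) X)

variable [Fintype J] {ζ : A} {ℓ : ℕ}

theorem rootEval_psum [IsDomain A] (hζ : IsPrimitiveRoot ζ ℓ) {k : ℕ} (hk : ¬ ℓ ∣ k) :
    rootEval ζ ℓ J (psum _ A k) = psum J A k := by
  simp only [psum, rootEval, map_sum, map_pow, aeval_X]
  simp only [Fintype.sum_sum_type, Sum.elim_inl, Sum.elim_inr, ← map_pow, ← map_sum,
    sum_pow_pow_eq_zero hζ hk, map_zero, zero_add]

theorem rootEval_psumPart [IsDomain A] (hζ : IsPrimitiveRoot ζ ℓ) {μ : Nat.Partition n}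
    (hμ : ¬ IsClassSingular ℓ μ) : rootEval ζ ℓ J (psumPart _ A μ) = psumPart J A μ := by
  rw [psumPart, map_multiset_prod, Multiset.map_map, psumPart]
  exact congrArg _ (Multiset.map_congr rfl fun k hk => rootEval_psum hζ fun h => hμ ⟨k, hk, h⟩)

variable [DecidableEq J]

theorem coeff_rootEval_prod_map_X (s : Multiset (Fin ℓ ⊕ J)) (β : J →₀ ℕ) :
    coeff β (rootEval ζ ℓ J (s.map X).prod) =
      if ∀ j, s.count (Sum.inr j) = β j then ∏ i : Fin ℓ, (ζ ^ (i : ℕ)) ^ s.count (Sum.inl i)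
      else 0 := by
  rw [prod_map_X]
  simp only [rootEval, map_prod, map_pow, aeval_X]
  simp only [Fintype.prod_sum_type, Sum.elim_inl, Sum.elim_inr, ← map_pow, ← map_prod,
    prod_X_pow, coeff_C_mul, coeff_monomial, mul_ite, mul_one, mul_zero]
  refine if_congr ?_ rfl rfl
  simp [Finsupp.ext_iff]

end RootsOfUnity

section LeadingCoefficient

theorem parts_ofSym {σ : Type*} [Fintype σ] [DecidableEq σ] (s : Sym σ n) :
    (Nat.Partition.ofSym s).parts =
      (Finset.univ.val.map fun k => (s : Multiset σ).count k).filter (· ≠ 0) := by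
  have hdedup : (s : Multiset σ).dedup =
      Finset.univ.val.filter fun k => (s : Multiset σ).count k ≠ 0 := by
    refine (Multiset.Nodup.ext (Multiset.nodup_dedup _) (Finset.univ.nodup.filter _)).2 fun k => ?_
    simp
  rw [Multiset.filter_map, Nat.Partition.ofSym]
  exact congrArg _ hdedup

variable {J : Type*} [Fintype J] {ℓ r : ℕ} {β : J →₀ ℕ} {lam : Nat.Partition n}

theorem sum_const_add_sum_eq
    (hlam : lam.parts = Multiset.replicate ℓ r + Finset.univ.val.map β) :
    ∑ _i : Fin ℓ, r + ∑ j, β j = n := by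
  rw [← lam.parts_sum, hlam, Multiset.sum_add, Multiset.sum_replicate, Finset.sum_const,
    Finset.card_univ, Fintype.card_fin, Finset.sum_eq_multiset_sum]

variable [DecidableEq J]

theorem parts_ofSym_of_count_inr {s : Sym (Fin ℓ ⊕ J) n}
    (hs : ∀ j, (s : Multiset (Fin ℓ ⊕ J)).count (Sum.inr j) = β j) :
    (Nat.Partition.ofSym s).parts =
      (Finset.univ.val.map (fun i => (s : Multiset (Fin ℓ ⊕ J)).count (Sum.inl i)) +
        Finset.univ.val.map β).filter (· ≠ 0) := by
  rw [parts_ofSym, ← Finset.univ_disjSum_univ, Finset.val_disjSum, Multiset.disjSum,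
    Multiset.map_add, Multiset.map_map, Multiset.map_map]
  simp only [Function.comp_def, hs]

theorem ofSym_eq_of_count {s : Sym (Fin ℓ ⊕ J) n}
    (hlam : lam.parts = Multiset.replicate ℓ r + Finset.univ.val.map β)
    (hinl : ∀ i, (s : Multiset (Fin ℓ ⊕ J)).count (Sum.inl i) = r)
    (hinr : ∀ j, (s : Multiset (Fin ℓ ⊕ J)).count (Sum.inr j) = β j) :
    Nat.Partition.ofSym s = lam := by
  ext1
  rw [parts_ofSym_of_count_inr hinr]
  simp only [hinl, Multiset.map_const', Finset.card_val, Finset.card_univ, Fintype.card_fin,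
    ← hlam]
  exact Multiset.filter_eq_self.2 fun i hi => (lam.parts_pos hi).ne'

theorem count_inl_eq_or_plex {s : Sym (Fin ℓ ⊕ J) n}
    (hlam : lam.parts = Multiset.replicate ℓ r + Finset.univ.val.map β)
    (hinr : ∀ j, (s : Multiset (Fin ℓ ⊕ J)).count (Sum.inr j) = β j) :
    (∀ i, (s : Multiset (Fin ℓ ⊕ J)).count (Sum.inl i) = r) ∨
      plex lam (Nat.Partition.ofSym s) := by
  set a : Fin ℓ → ℕ := fun i => (s : Multiset (Fin ℓ ⊕ J)).count (Sum.inl i)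
  by_cases h : ∃ i, r < a i
  · obtain ⟨i, hi⟩ := h
    have hcount : ∀ q, r < q → lam.parts.count q = (Finset.univ.val.map β).count q := fun q hq => by
      rw [hlam, Multiset.count_add, Multiset.count_replicate, if_neg hq.ne, zero_add]
    have hcount' : ∀ q, r < q → (Nat.Partition.ofSym s).parts.count q =
        (Finset.univ.val.map a).count q + (Finset.univ.val.map β).count q := fun q hq => by
      rw [parts_ofSym_of_count_inr hinr, Multiset.count_filter_of_pos (by omega),
        Multiset.count_add]
    refine .inr (plex_of_count_le (r := a i) (fun q hq => ?_) ?_)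
    · rw [hcount q (hi.trans hq), hcount' q (hi.trans hq)]
      exact Nat.le_add_left _ _
    · rw [hcount _ hi, hcount' _ hi]
      exact Nat.lt_add_of_pos_left
        (Multiset.count_pos.2 (Multiset.mem_map_of_mem a (Finset.mem_univ_val i)))
  · push Not at h
    have hs : ∑ i, a i + ∑ j, β j = n := by
      have hcard := Multiset.sum_count_eq_card fun k (_ : k ∈ (s : Multiset (Fin ℓ ⊕ J))) =>
        Finset.mem_univ k
      rw [Fintype.sum_sum_type, Sym.card_coe] at hcard
      simpa only [hinr] using hcard
    have hsum : ∑ i, a i = ∑ _i : Fin ℓ, r := by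
      have := sum_const_add_sum_eq hlam
      omega
    exact .inl fun i => (Finset.sum_eq_sum_iff_of_le fun i _ => h i).1 hsum i (Finset.mem_univ i)

theorem exists_sym_count_eq
    (hlam : lam.parts = Multiset.replicate ℓ r + Finset.univ.val.map β) :
    ∃ s : Sym (Fin ℓ ⊕ J) n,
      ∀ k, (s : Multiset (Fin ℓ ⊕ J)).count k = Sum.elim (fun _ => r) β k := by
  have hsum : ∑ k, Sum.elim (fun _ : Fin ℓ => r) β k = n :=
    by
    rw [Fintype.sum_sum_type]
    exact sum_const_add_sum_eq hlam
  refine ⟨(Sym.equivNatSumOfFintype _ n).symm ⟨_, hsum⟩, fun k => ?_⟩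
  rw [← Sym.coe_equivNatSumOfFintype_apply_apply, Equiv.apply_symm_apply]

variable {A : Type*} [CommRing A] {ζ : A}

theorem coeff_rootEval_msymm (ν : Nat.Partition n) :
    coeff β (rootEval ζ ℓ J (msymm _ A ν)) = ∑ s : {s : Sym (Fin ℓ ⊕ J) n // .ofSym s = ν},
      if ∀ j, (s.1 : Multiset (Fin ℓ ⊕ J)).count (Sum.inr j) = β j then
        ∏ i : Fin ℓ, (ζ ^ (i : ℕ)) ^ (s.1 : Multiset (Fin ℓ ⊕ J)).count (Sum.inl i) else 0 := by
  rw [msymm, map_sum, coeff_sum]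
  exact Finset.sum_congr rfl fun s _ => coeff_rootEval_prod_map_X _ β

theorem plexLE_of_coeff_rootEval_msymm_ne_zero
    (hlam : lam.parts = Multiset.replicate ℓ r + Finset.univ.val.map β) {ν : Nat.Partition n}
    (hν : coeff β (rootEval ζ ℓ J (msymm _ A ν)) ≠ 0) : plexLE lam ν := by
  rw [coeff_rootEval_msymm] at hν
  obtain ⟨⟨s, rfl⟩, -, hs⟩ := Finset.exists_ne_zero_of_sum_ne_zero hν
  have hinr := (ite_ne_right_iff.1 hs).1
  refine (count_inl_eq_or_plex hlam hinr).imp_left fun hinl => ?_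
  exact (ofSym_eq_of_count hlam hinl hinr).symm

theorem isUnit_coeff_rootEval_msymm (hζ : IsUnit ζ)
    (hlam : lam.parts = Multiset.replicate ℓ r + Finset.univ.val.map β) :
    IsUnit (coeff β (rootEval ζ ℓ J (msymm _ A lam))) := by
  obtain ⟨s₀, hs₀⟩ := exists_sym_count_eq hlam
  have hinr : ∀ j, (s₀ : Multiset (Fin ℓ ⊕ J)).count (Sum.inr j) = β j := fun j => hs₀ (Sum.inr j)
  have unique : ∀ s : Sym (Fin ℓ ⊕ J) n, Nat.Partition.ofSym s = lam →
      (∀ j, (s : Multiset (Fin ℓ ⊕ J)).count (Sum.inr j) = β j) → s = s₀ := fun s hs hsr => by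
    have hsl := (count_inl_eq_or_plex hlam hsr).resolve_right fun h =>
      lt_irrefl (descList lam) ((List.lt_iff_lex_lt _ _).2 (hs ▸ h))
    refine Sym.coe_injective (Multiset.ext.2 fun k => ?_)
    rw [hs₀]
    exact k.rec hsl hsr
  rw [coeff_rootEval_msymm,
    Fintype.sum_eq_single ⟨s₀, ofSym_eq_of_count hlam (fun i => hs₀ (.inl i)) hinr⟩, if_pos hinr]
  · exact IsUnit.prod_univ_iff.2 fun i => (hζ.pow _).pow _
  · exact fun s hs => if_neg fun h => hs (Subtype.ext (unique s.1 s.2 h))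

end LeadingCoefficient

section SingularRelation

variable {ℓ : ℕ}

theorem exists_linearMap_apply_eq_one_of_powerBasis {R S : Type*} [CommRing R] [CommRing S]
    [Algebra R S] [Nontrivial S] (pb : PowerBasis R S) {u : S} (hu : IsUnit u) :
    ∃ φ : S →ₗ[R] R, φ u = 1 := by
  obtain ⟨u, rfl⟩ := hu
  let i : Fin pb.dim := ⟨0, pb.dim_pos⟩
  have hi : pb.basis i = 1 := by simp [i]
  refine ⟨pb.basis.coord i ∘ₗ LinearMap.mulLeft R (↑u⁻¹ : S), ?_⟩
  rw [LinearMap.comp_apply, LinearMap.mulLeft_apply, Units.inv_mul, ← hi, Module.Basis.coord_apply,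
    Module.Basis.repr_self, Finsupp.single_eq_same]

open NumberField in
theorem exists_isPrimitiveRoot_forall_isUnit_exists_linearMap (hℓ : 1 ≤ ℓ) :
    ∃ ζ : 𝓞 (CyclotomicField ℓ ℚ), IsPrimitiveRoot ζ ℓ ∧
      ∀ u, IsUnit u → ∃ φ : 𝓞 (CyclotomicField ℓ ℚ) →ₗ[ℤ] ℤ, φ u = 1 := by
  have : NeZero ℓ := ⟨by omega⟩
  have : IsCyclotomicExtension {ℓ} ℚ (CyclotomicField ℓ ℚ) :=
    CyclotomicField.isCyclotomicExtension ℓ ℚ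
  have hζ := IsCyclotomicExtension.zeta_spec ℓ ℚ (CyclotomicField ℓ ℚ)
  exact ⟨hζ.toInteger, hζ.toInteger_isPrimitiveRoot, fun _ =>
    exists_linearMap_apply_eq_one_of_powerBasis hζ.integralPowerBasis⟩

theorem IsSingular.exists_parts_eq {lam : Nat.Partition n} (hlam : IsSingular ℓ lam) :
    ∃ r > 0, ∃ M : Multiset ℕ, lam.parts = Multiset.replicate ℓ r + M := by
  obtain ⟨r, hr, hcount⟩ := hlam
  obtain ⟨M, hM⟩ := Multiset.le_iff_exists_add.1 (Multiset.le_count_iff_replicate_le.1 hcount)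
  exact ⟨r, lam.parts_pos hr, M, hM⟩

theorem sum_permChar_mul_coeff_rootEval_msymm {A J : Type*} [CommRing A] [IsDomain A] [Fintype J]
    [DecidableEq J] {ζ : A} (hζ : IsPrimitiveRoot ζ ℓ) {β : J →₀ ℕ} (hβ : ∑ j, β j ≠ n)
    {g : Equiv.Perm (Fin n)} (hg : ¬ IsClassSingular ℓ (cycleTypePartition g)) :
    ∑ ν, permChar ν g • coeff β (rootEval ζ ℓ J (msymm _ A ν)) = 0 := by
  have h := congrArg (fun p => coeff β (rootEval ζ ℓ J p))
    (psumPart_cycleTypePartition (Fin ℓ ⊕ J) A g)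
  simp only [rootEval_psumPart hζ hg, map_sum, map_nsmul, coeff_sum, coeff_smul] at h
  rw [← h]
  exact (isHomogeneous_psumPart J A _).coeff_eq_zero (by rwa [Finsupp.degree_eq_sum])

theorem IsSingular.exists_permChar_relation (hℓ : 1 ≤ ℓ) {lam : Nat.Partition n}
    (hlam : IsSingular ℓ lam) :
    ∃ a : Nat.Partition n → ℤ, a lam = 1 ∧ (∀ ν, a ν ≠ 0 → plexLE lam ν) ∧
      ∀ g, ¬ IsClassSingular ℓ (cycleTypePartition g) → ∑ ν, a ν * permChar ν g = 0 := by
  obtain ⟨r, hr, M, hM⟩ := hlam.exists_parts_eq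
  obtain ⟨ζ, hζ, hunit⟩ := exists_isPrimitiveRoot_forall_isUnit_exists_linearMap hℓ
  let β : M.ToType →₀ ℕ := Finsupp.equivFunOnFinite.symm fun j => j.1
  have hβ : Finset.univ.val.map β = M := M.map_univ_coe
  rw [← hβ] at hM
  obtain ⟨φ, hφ⟩ := hunit _ (isUnit_coeff_rootEval_msymm (hζ.isUnit (by omega)) hM)
  have hsum : ∑ j, β j ≠ n := by
    have := sum_const_add_sum_eq hM
    have : 0 < ∑ _i : Fin ℓ, r := Fin.sum_const ℓ r ▸ nsmul_pos hr (by omega)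
    omega
  refine ⟨fun ν => φ (coeff β (rootEval ζ ℓ _ (msymm _ _ ν))), hφ, fun ν hν => ?_, fun g hg => ?_⟩
  · exact plexLE_of_coeff_rootEval_msymm_ne_zero hM fun h =>
      hν ((congrArg φ h).trans (map_zero φ))
  · have hrel := congrArg φ (sum_permChar_mul_coeff_rootEval_msymm hζ hsum hg)
    simp only [map_sum, map_nsmul, map_zero] at hrel
    simpa only [nsmul_eq_mul, mul_comm] using hrel

end SingularRelation

section CharacterTable

variable {X : Nat.Partition n → Nat.Partition n → ℤ}

theorem IsCharTable.sum_mul_eq (hX : IsCharTable X) (lam mu : Nat.Partition n) :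
    ∑ g : Equiv.Perm (Fin n), X lam (cycleTypePartition g) * X mu (cycleTypePartition g) =
      if lam = mu then (Nat.card (Equiv.Perm (Fin n)) : ℤ) else 0 := by
  obtain ⟨hirr, -, hinj⟩ := hX
  choose V hV hVX using hirr
  have hiso : Nonempty (V lam ≅ V mu) ↔ lam = mu := by
    refine ⟨fun ⟨i⟩ => hinj (funext fun ρ => ?_), fun h => h ▸ ⟨CategoryTheory.Iso.refl _⟩⟩
    obtain ⟨g, rfl⟩ := cycleTypePartition_surjective ρ
    have := congrFun (FDRep.char_iso i) g
    rw [hVX, hVX] at this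
    exact_mod_cast this
  have hcard : (Nat.card (Equiv.Perm (Fin n)) : ℂ) ≠ 0 := Nat.cast_ne_zero.2 Nat.card_pos.ne'
  have horth := FDRep.char_orthonormal (V lam) (V mu)
  simp only [hVX, cycleTypePartition_inv, hiso] at horth
  rw [inv_mul_eq_iff_eq_mul₀ hcard, mul_ite, mul_one, mul_zero] at horth
  exact_mod_cast horth

/-- The number of permutations of cycle type `ρ`, that is the size of a conjugacy class of `S_n`. -/
def classSize (ρ : Nat.Partition n) : ℕ := Finset.card {g | cycleTypePartition g = ρ}

theorem IsCharTable.mul_diagonal_mul_transpose (hX : IsCharTable X) :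
    of X * diagonal (fun ρ => (classSize ρ : ℤ)) * (of X)ᵀ =
      (Nat.card (Equiv.Perm (Fin n)) : ℤ) • 1 := by
  ext lam mu
  have hclass : ∀ ρ, ∑ g with cycleTypePartition g = ρ,
      X lam (cycleTypePartition g) * X mu (cycleTypePartition g) =
        X lam ρ * classSize ρ * X mu ρ := fun ρ => by
    rw [mul_right_comm, mul_comm, ← nsmul_eq_mul, classSize, ← Finset.sum_const]
    exact Finset.sum_congr rfl fun g hg => by rw [(Finset.mem_filter_univ g).1 hg]
  rw [mul_apply]
  simp only [mul_diagonal, transpose_apply, of_apply, ← hclass]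
  rw [Finset.sum_fiberwise, hX.sum_mul_eq, Matrix.smul_apply, one_apply, smul_ite, smul_zero,
    smul_eq_mul, mul_one]

theorem card_isSingular_eq_card_isClassSingular {ℓ : ℕ} (hℓ : 0 < ℓ) :
    Fintype.card {lam : Nat.Partition n // IsSingular ℓ lam} =
      Fintype.card {μ : Nat.Partition n // IsClassSingular ℓ μ} := by
  have hrow : (Nat.Partition.countRestricted n ℓ)ᶜ =
      ({lam | IsSingular ℓ lam} : Finset (Nat.Partition n)) := by
    ext lam
    rw [Finset.mem_compl, Nat.Partition.countRestricted, Finset.mem_filter_univ,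
      Finset.mem_filter_univ, IsSingular]
    push Not
    rfl
  have hcol : (Nat.Partition.restricted n (¬ ℓ ∣ ·))ᶜ =
      ({μ | IsClassSingular ℓ μ} : Finset (Nat.Partition n)) := by
    ext μ
    rw [Finset.mem_compl, Nat.Partition.restricted, Finset.mem_filter_univ,
      Finset.mem_filter_univ, IsClassSingular]
    push Not
    rfl
  rw [Fintype.card_subtype, Fintype.card_subtype, ← hrow, ← hcol, Finset.card_compl,
    Finset.card_compl, Nat.Partition.card_restricted_eq_card_countRestricted n hℓ]

theorem IsCharTable.exists_virtualChar_eq_zero {ℓ : ℕ} (hℓ : 1 ≤ ℓ) (hX : IsCharTable X)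
    {lam : Nat.Partition n} (hlam : IsSingular ℓ lam) :
    ∃ c : Nat.Partition n → ℤ, c lam = 1 ∧ (∀ ν, c ν ≠ 0 → plexLE lam ν) ∧
      ∀ ρ, ¬ IsClassSingular ℓ ρ → ∑ ν, c ν * X ν ρ = 0 := by
  obtain ⟨-, ⟨d, hdiag, htri, hperm⟩, -⟩ := hX
  obtain ⟨a, ha, hsupp, hrel⟩ := hlam.exists_permChar_relation hℓ
  have hle : ∀ ν μ, a ν * d ν μ ≠ 0 → descList lam ≤ descList ν ∧ descList ν ≤ descList μ :=
    fun ν μ h => ⟨plexLE_iff.1 (hsupp ν (left_ne_zero_of_mul h)),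
      plexLE_iff.1 (htri ν μ (right_ne_zero_of_mul h))⟩
  refine ⟨fun μ => ∑ ν, a ν * d ν μ, ?_, fun μ hμ => ?_, fun ρ hρ => ?_⟩
  · beta_reduce
    rw [Fintype.sum_eq_single lam fun ν hν => not_not.1 fun h =>
      hν (descList_injective ((hle ν lam h).2.antisymm (hle ν lam h).1)), ha, hdiag, one_mul]
  · obtain ⟨ν, -, h⟩ := Finset.exists_ne_zero_of_sum_ne_zero hμ
    exact plexLE_iff.2 ((hle ν μ h).1.trans (hle ν μ h).2)
  · obtain ⟨g, rfl⟩ := cycleTypePartition_surjective ρ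
    rw [← hrel g hρ]
    simp only [hperm, Finset.sum_mul, Finset.mul_sum, mul_assoc]
    exact Finset.sum_comm

theorem det_submatrix_val_eq_one {p : Nat.Partition n → Prop}
    {c : Matrix {lam // p lam} (Nat.Partition n) ℤ} (hdiag : ∀ s, c s s.1 = 1)
    (htri : ∀ s ν, c s ν ≠ 0 → plexLE s.1 ν) : (c.submatrix id Subtype.val).det = 1 := by
  let _ : LinearOrder {lam // p lam} := LinearOrder.lift' (fun s => descList s.1)
    (descList_injective.comp Subtype.val_injective)
  have hc : (c.submatrix id Subtype.val).BlockTriangular id := fun s t hst =>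
    not_not.1 fun h => (plexLE_iff.1 (htri s t h)).not_gt hst
  rw [det_of_isUpperTriangular hc]
  exact Finset.prod_eq_one fun s _ => hdiag s

end CharacterTable

/-- **Corollary 5.2(1).** Fix `ℓ ≥ 1` and `n`.  The restrictions to the `ℓ`-singular conjugacy
classes of the irreducible characters `χ^λ` of `S_n` indexed by `ℓ`-singular partitions `λ` form
a ℤ-basis for the ℤ-span of the restrictions of all irreducible characters of `S_n` to the
`ℓ`-singular classes. -/
theorem singular_basic_set (ℓ n : ℕ) (hℓ : 1 ≤ ℓ)
    (X : Nat.Partition n → Nat.Partition n → ℤ) (hX : IsCharTable X) :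
    (LinearIndependent ℤ fun lam : {lam : Nat.Partition n // IsSingular ℓ lam} =>
        fun μ : {μ : Nat.Partition n // IsClassSingular ℓ μ} => X lam.1 μ.1) ∧
      Submodule.span ℤ (Set.range fun lam : {lam : Nat.Partition n // IsSingular ℓ lam} =>
          fun μ : {μ : Nat.Partition n // IsClassSingular ℓ μ} => X lam.1 μ.1) =
        Submodule.span ℤ (Set.range fun lam : Nat.Partition n =>
          fun μ : {μ : Nat.Partition n // IsClassSingular ℓ μ} => X lam μ.1) := by
  choose c hdiag htri hzero using fun s : {lam : Nat.Partition n // IsSingular ℓ lam} =>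
    hX.exists_virtualChar_eq_zero hℓ s.2
  let D : Matrix (Nat.Partition n) (Nat.Partition n) ℤ := diagonal fun ρ => (classSize ρ : ℤ)
  have hcol : ∀ s ρ, ¬ IsClassSingular ℓ ρ → (of c * of X * D) s ρ = 0 := fun s ρ hρ =>
    (mul_diagonal ..).trans (mul_eq_zero_of_left (hzero s ρ hρ) _)
  have hpairing : (of c * of X * D).submatrix id Subtype.val *
      ((of X).submatrix id (Subtype.val : {μ // IsClassSingular ℓ μ} → Nat.Partition n))ᵀ =
        (Nat.card (Equiv.Perm (Fin n)) : ℤ) • of c := by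
    rw [transpose_submatrix, submatrix_val_mul_submatrix_val_of_col_eq_zero _ hcol,
      Matrix.mul_assoc, Matrix.mul_assoc, ← Matrix.mul_assoc (of X), hX.mul_diagonal_mul_transpose,
      Matrix.mul_smul, Matrix.mul_one]
  obtain ⟨hli, hspan⟩ := linearIndependent_and_span_row_submatrix_eq
    (card_isSingular_eq_card_isClassSingular hℓ) (Nat.cast_ne_zero.2 Nat.card_pos.ne')
    ((det_submatrix_val_eq_one hdiag htri).symm ▸ isUnit_one) hpairing
  exact ⟨hli, hspan⟩

end SnTable
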